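/- arXiv:1511.07687 — 4 statements merged into one kernel-verified Lean document; each statement's English description precedes it below -/
import Mathlib

section
/- Full rank of the Jacobian of 𝓗_{4n−1} for the canonical form (Part 2 of the proof of Proposition 4). Let θ = (θ_a, θ_b) ∈ R^n × R^n, x ∈ R^n, and v = (v_0, …, v_{4n−2}) ∈ R^{4n−1}. Assume the 2n×2n Hankel matrix 𝔐_{2n−1}(v) is invertible and the 2n×2n Sylvester matrix M(θ_a, θ_b) is invertible. Then the differential of (x, θ) ↦ 𝓗_{4n−1}(x, θ, v) at (x, θ) is injective: if (∂𝓗_{4n−1}/∂x)(x,θ,v) v_x + (∂𝓗_{4n−1}/∂θ)(x,θ,v) v_θ = 0 for some v_x ∈ R^n, v_θ ∈ R^{2n}, then v_x = 0 and v_θ = 0. -/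
open scoped Matrix BigOperators

/-- The first basis row vector `e₁ᵀ = (1, 0, …, 0)`. -/
def e1 (n : ℕ) : Fin n → ℝ := fun j => if (j : ℕ) = 0 then 1 else 0

/-- Canonical SISO form : `A(θ_a)` has first column `−θ_a` and entries `(i, i+1)` equal
to `1`, all other entries `0`. -/
def Acan (n : ℕ) (θa : Fin n → ℝ) : Matrix (Fin n) (Fin n) ℝ :=
  fun i j => if (j : ℕ) = 0 then -θa i else if (j : ℕ) = (i : ℕ) + 1 then 1 else 0

/-- `H_r(θ)` : the `r × n` matrix stacking the rows `C A(θ_a)^{j-1}`, `j = 1,…,r`. -/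
def Hcan (n r : ℕ) (θa : Fin n → ℝ) : Matrix (Fin r) (Fin n) ℝ :=
  fun j => Matrix.vecMul (e1 n) (Acan n θa ^ (j : ℕ))

/-- The down-shift matrix `S ∈ ℝ^{r×r}`. -/
def shiftMat (r : ℕ) : Matrix (Fin r) (Fin r) ℝ :=
  fun i j => if (i : ℕ) = (j : ℕ) + 1 then 1 else 0

/-- `𝓗_r(x, θ, v) = H_r(θ) x + Σ_{j=1}^{r−1} S^j H_r(θ) B(θ_b) v_{j−1}` for the
canonical form. -/
def HHcan (n r : ℕ) (x θa θb : Fin n → ℝ) (v : Fin (r - 1) → ℝ) : Fin r → ℝ :=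
  Hcan n r θa *ᵥ x
    + ∑ j : Fin (r - 1), v j • ((shiftMat r ^ ((j : ℕ) + 1)) *ᵥ (Hcan n r θa *ᵥ θb))

/-- The `a × a` Hankel matrix of a vector `v ∈ ℝ^b` : entry `(i,j)` is `v_{i+j}`. -/
def hankelOf (a b : ℕ) (v : Fin b → ℝ) : Matrix (Fin a) (Fin a) ℝ :=
  fun i j => if h : (i : ℕ) + (j : ℕ) < b then v ⟨(i : ℕ) + (j : ℕ), h⟩ else 0

/-- The column `(θ_{bn}, θ_{b(n−1)}, …, θ_{b1}, 0, …, 0)ᵀ ∈ ℝ^{2n}`. -/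
def colB (n : ℕ) (θb : Fin n → ℝ) : Fin (2 * n) → ℝ :=
  fun i => if h : (i : ℕ) < n then θb ⟨n - 1 - (i : ℕ), by omega⟩ else 0

/-- The column `(θ_{an}, θ_{a(n−1)}, …, θ_{a1}, 1, 0, …, 0)ᵀ ∈ ℝ^{2n}`. -/
def colA (n : ℕ) (θa : Fin n → ℝ) : Fin (2 * n) → ℝ :=
  fun i => if h : (i : ℕ) < n then θa ⟨n - 1 - (i : ℕ), by omega⟩
    else if (i : ℕ) = n then 1 else 0

/-- The `2n × 2n` Sylvester (resultant) matrix. -/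
def sylvesterMat (n : ℕ) (θa θb : Fin n → ℝ) : Matrix (Fin (2 * n)) (Fin (2 * n)) ℝ :=
  fun i j =>
    if (j : ℕ) < n then
      (if h : (j : ℕ) ≤ (i : ℕ) then colB n θb ⟨(i : ℕ) - (j : ℕ), by have := i.2; omega⟩
        else 0)
    else
      (if h : (j : ℕ) - n ≤ (i : ℕ) then
        colA n θa ⟨(i : ℕ) - ((j : ℕ) - n), by have := i.2; omega⟩ else 0)

/-!
Let `σ` be the shift on sequences. The output `y` and input `w` of the canonical form satisfy
`a(σ) y = b(σ) w`, where `a = Xⁿ + θ_{a1} Xⁿ⁻¹ + ⋯ + θ_{an}` and `b = θ_{b1} Xⁿ⁻¹ + ⋯ + θ_{bn}`.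
The derivative of the state in a direction `(v_x, v_a, v_b)` is again a state of the canonical form,
now driven by `v_b w - v_a y`. If its output vanishes up to time `4n - 1`, then `p(σ) y = q(σ) w` up
to time `3n - 1`, where `p`, `q` are the polynomials with parameters `v_a`, `v_b`. Applying `a(σ)`
eliminates `y` and leaves `(p b - a q)(σ) w = 0` up to time `2n - 1`. As `p b - a q` has degree less
than `2n`, invertibility of the Hankel matrix forces `p b = a q`. The Sylvester determinant is the
resultant of `a` and `b`, so these are coprime, and comparing degrees gives `p = q = 0`. Then the
first `n` outputs of the derivative are the coordinates of `v_x`.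
-/

open Polynomial

section ZeroExtend

variable {R : Type*} [CommSemiring R] {n : ℕ}

/-- Extension of a finite tuple by zero to a sequence indexed by `ℕ`, so that index arithmetic needs
no bound proofs. -/
noncomputable def zeroExtend : (Fin n → R) →ₗ[R] ℕ → R :=
  Function.ExtendByZero.linearMap R Fin.val

lemma zeroExtend_of_lt (u : Fin n → R) {i : ℕ} (hi : i < n) : zeroExtend u i = u ⟨i, hi⟩ :=
  Fin.val_injective.extend_apply u 0 ⟨i, hi⟩

@[simp]
lemma zeroExtend_val (u : Fin n → R) (i : Fin n) : zeroExtend u i = u i :=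
  zeroExtend_of_lt u i.isLt

lemma zeroExtend_of_le (u : Fin n → R) {i : ℕ} (hi : n ≤ i) : zeroExtend u i = 0 :=
  Function.extend_apply' u (0 : ℕ → R) i fun ⟨j, hj⟩ => (j.isLt.trans_le hi).ne hj

lemma sum_ite_val_eq_mul (u : Fin n → R) (m : ℕ) :
    ∑ j : Fin n, (if (j : ℕ) = m then 1 else 0) * u j = zeroExtend u m := by
  simp only [← zeroExtend_val u]
  rw [Fin.sum_univ_eq_sum_range (fun j => (if j = m then 1 else 0) * zeroExtend u j) n]
  simp +contextual [zeroExtend_of_le]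

end ZeroExtend

section SeqShift

variable {R : Type*} [CommSemiring R]

variable (R) in
/-- The shift `(σ v) k = v (k + 1)` on sequences; a polynomial `p` acts on sequences as the
difference operator `aeval (seqShift R) p`. -/
def seqShift : Module.End R (ℕ → R) := LinearMap.funLeft R R Nat.succ

lemma seqShift_pow_apply (m : ℕ) (v : ℕ → R) (k : ℕ) : (seqShift R ^ m) v k = v (k + m) := by
  induction m generalizing k with
  | zero => rfl
  | succ m ih =>
    rw [pow_succ', Module.End.mul_apply]
    exact (ih (k + 1)).trans (congrArg v (by ring))

lemma aeval_seqShift_apply {p : R[X]} {N : ℕ} (hp : p.degree < N) (v : ℕ → R) (k : ℕ) :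
    aeval (seqShift R) p v k = ∑ l ∈ Finset.range N, p.coeff l * v (k + l) := by
  rcases eq_or_ne p 0 with rfl | hp0
  · simp
  simp [aeval_eq_sum_range' ((natDegree_lt_iff_degree_lt hp0).mpr hp), seqShift_pow_apply]

lemma aeval_seqShift_congr {p : R[X]} {u v : ℕ → R} {k : ℕ}
    (h : ∀ l ≤ p.natDegree, u (k + l) = v (k + l)) :
    aeval (seqShift R) p u k = aeval (seqShift R) p v k := by
  have hp : p.degree < (p.natDegree + 1 : ℕ) := degree_le_natDegree.trans_lt (by norm_cast; simp)
  rw [aeval_seqShift_apply hp, aeval_seqShift_apply hp]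
  exact Finset.sum_congr rfl fun l hl => by rw [h l (Finset.mem_range_succ_iff.mp hl)]

end SeqShift

section Identifiability

variable {R : Type*} [CommRing R]

/-- The Hankel matrix with `(i, j)` entry `v (i + j)`. -/
def seqHankel (N : ℕ) (v : ℕ → R) : Matrix (Fin N) (Fin N) R := .of fun i j => v (i + j)

lemma eq_zero_of_aeval_seqShift_eq_zero {N : ℕ} {v : ℕ → R} (hv : IsUnit (seqHankel N v).det)
    {p : R[X]} (hp : p.degree < N) (h : ∀ k < N, aeval (seqShift R) p v k = 0) : p = 0 := by
  have hcoeff : seqHankel N v *ᵥ (fun j : Fin N => p.coeff j) = seqHankel N v *ᵥ 0 := by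
    ext k
    rw [Matrix.mulVec_zero, Pi.zero_apply, ← h k k.isLt, aeval_seqShift_apply hp,
      ← Fin.sum_univ_eq_sum_range (fun l => p.coeff l * v (k + l))]
    simp only [Matrix.mulVec, dotProduct, seqHankel, Matrix.of_apply, mul_comm]
  have hzero := Matrix.mulVec_injective_of_isUnit ((Matrix.isUnit_iff_isUnit_det _).mpr hv) hcoeff
  ext l
  rcases lt_or_ge l N with hl | hl
  · exact congrFun hzero ⟨l, hl⟩
  · exact coeff_eq_zero_of_degree_lt (hp.trans_le (by exact_mod_cast hl))

lemma eq_zero_of_mul_eq_mul_of_isCoprime {a b p q : R[X]} (ha : a.Monic) (hab : IsCoprime a b)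
    (hp : p.degree < a.degree) (h : p * b = a * q) : p = 0 ∧ q = 0 := by
  have hdvd : a ∣ p := hab.dvd_of_dvd_mul_right ⟨q, h⟩
  have hp0 : p = 0 := by
    by_contra hne
    exact ha.not_dvd_of_degree_lt hne hp hdvd
  refine ⟨hp0, ?_⟩
  rwa [hp0, zero_mul, eq_comm, ha.mul_right_eq_zero_iff] at h

lemma degree_mul_lt_of_le_of_lt {p q : R[X]} {m n : ℕ} (hp : p.degree ≤ m) (hq : q.degree < n) :
    (p * q).degree < (m + n : ℕ) :=
  (degree_mul_le p q).trans_lt <| (add_le_add_left hp _).trans_lt <|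
    WithBot.add_lt_add_left WithBot.coe_ne_bot hq

lemma eq_zero_of_perturbed_difference_equation {a b p q : R[X]} {y w : ℕ → R} {n : ℕ}
    (ha : a.Monic) (han : a.natDegree = n) (hb : b.degree < n) (hab : IsCoprime a b)
    (hp : p.degree < n) (hq : q.degree < n) (hw : IsUnit (seqHankel (2 * n) w).det)
    (hy : aeval (seqShift R) a y = aeval (seqShift R) b w)
    (hpert : ∀ k < 3 * n, aeval (seqShift R) p y k = aeval (seqShift R) q w k) :
    p = 0 ∧ q = 0 := by
  nontriviality R
  have hadeg : a.degree = n := by rw [degree_eq_natDegree ha.ne_zero, han]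
  refine eq_zero_of_mul_eq_mul_of_isCoprime ha hab (hadeg ▸ hp) (sub_eq_zero.mp ?_)
  refine eq_zero_of_aeval_seqShift_eq_zero hw ?_ fun k hk => ?_
  · rw [two_mul]
    exact (degree_sub_le _ _).trans_lt
      (max_lt (degree_mul_lt_of_le_of_lt hp.le hb) (degree_mul_lt_of_le_of_lt hadeg.le hq))
  · have helim : aeval (seqShift R) (p * b) w k = aeval (seqShift R) (a * q) w k := calc
      aeval (seqShift R) (p * b) w k
        = aeval (seqShift R) p (aeval (seqShift R) a y) k := by
          rw [hy, map_mul, Module.End.mul_apply]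
      _ = aeval (seqShift R) a (aeval (seqShift R) p y) k := by
          rw [← Module.End.mul_apply, ← map_mul, mul_comm, map_mul, Module.End.mul_apply]
      _ = aeval (seqShift R) a (aeval (seqShift R) q w) k :=
          aeval_seqShift_congr fun l hl => hpert _ (by omega)
      _ = aeval (seqShift R) (a * q) w k := by rw [map_mul, Module.End.mul_apply]
    rw [map_sub, LinearMap.sub_apply, Pi.sub_apply, helim, sub_self]

end Identifiability

lemma ite_mem_Icc_coeff_sub {R : Type*} [Semiring R] {p : R[X]} {m : ℕ} (hp : p.natDegree ≤ m)
    (i j : ℕ) :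
    (if i ∈ Set.Icc j (j + m) then p.coeff (i - j) else 0) =
      if j ≤ i then p.coeff (i - j) else 0 := by
  simp only [Set.mem_Icc, ite_and]
  split_ifs with hji him
  · rfl
  · exact (coeff_eq_zero_of_natDegree_lt (by omega)).symm
  · rfl

lemma resultant_eq_of_natDegree_le {R : Type*} [CommRing R] {f g : R[X]} (hf : f.Monic)
    {k : ℕ} (hg : g.natDegree ≤ k) : resultant f g f.natDegree k = resultant f g := by
  obtain ⟨d, rfl⟩ := Nat.exists_eq_add_of_le hg
  rw [resultant_add_right_deg _ _ _ _ _ le_rfl, hf.coeff_natDegree, one_pow, one_mul]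

section RevPoly

variable {R : Type*} [CommRing R] [DecidableEq R] {n : ℕ}

/-- The polynomial `u₁ Xⁿ⁻¹ + u₂ Xⁿ⁻² + ⋯ + uₙ` with parameter vector `u`: the numerator of the
transfer function for `u = θ_b`, and its denominator minus `Xⁿ` for `u = θ_a`. -/
noncomputable def revPoly (u : Fin n → R) : R[X] := ofFn n (u ∘ Fin.rev)

lemma revPoly_coeff (u : Fin n → R) (l : ℕ) :
    (revPoly u).coeff l = if h : l < n then u ⟨n - 1 - l, by omega⟩ else 0 := by
  split_ifs with hl
  · rw [revPoly, ofFn_coeff_eq_val_of_lt _ hl]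
    exact congrArg u (Fin.ext (by simp only [Fin.val_rev]; omega))
  · exact ofFn_coeff_eq_zero_of_ge _ (not_lt.mp hl)

lemma degree_revPoly_lt (u : Fin n → R) : (revPoly u).degree < n :=
  ofFn_degree_lt _

lemma revPoly_eq_zero_iff {u : Fin n → R} : revPoly u = 0 ↔ u = 0 := by
  rw [revPoly, ← map_zero (ofFn n), (injective_ofFn n).eq_iff]
  exact ⟨fun h => funext fun i => by simpa using congrFun h i.rev, fun h => by rw [h]; rfl⟩

lemma aeval_seqShift_revPoly (u : Fin n → R) (v : ℕ → R) (k : ℕ) :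
    aeval (seqShift R) (revPoly u) v k =
      ∑ l ∈ Finset.range n, zeroExtend u (n - (l + 1)) * v (k + l) := by
  rw [aeval_seqShift_apply (degree_revPoly_lt u)]
  refine Finset.sum_congr rfl fun l hl => ?_
  have hl := Finset.mem_range.mp hl
  rw [revPoly_coeff, dif_pos hl, zeroExtend_of_lt u (by omega)]
  congr 3
  omega

lemma natDegree_X_pow_add_revPoly [Nontrivial R] (u : Fin n → R) :
    (X ^ n + revPoly u).natDegree = n :=
  natDegree_eq_of_degree_eq_some <| by
    rw [degree_add_eq_left_of_degree_lt (by simpa using degree_revPoly_lt u), degree_X_pow]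

end RevPoly

section ObserverState

variable {R M : Type*} [Ring R] [AddCommGroup M] [Module R M]

/-- The state at time `k` of the canonical form started at `x` and driven by `u`. Coordinates are
indexed by all of `ℕ`, and values are taken in a module so that the derivative of the state with
respect to the parameters, a sequence of linear forms, is again an instance. -/
def observerState (x : ℕ → M) (a : ℕ → R) (u : ℕ → ℕ → M) : ℕ → ℕ → M
  | 0, i => x i
  | k + 1, i => observerState x a u k (i + 1) - a i • observerState x a u k 0 + u k i

variable {x : ℕ → M} {a : ℕ → R} {u : ℕ → ℕ → M}

lemma map_observerState {N : Type*} [AddCommGroup N] [Module R N] (f : M →ₗ[R] N) (k i : ℕ) :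
    f (observerState x a u k i) =
      observerState (fun i => f (x i)) a (fun k i => f (u k i)) k i := by
  induction k generalizing i with
  | zero => rfl
  | succ k ih => simp only [observerState, map_add, map_sub, map_smul, ih]

lemma observerState_eq_zero_of_le {n : ℕ} (hx : ∀ i, n ≤ i → x i = 0) (ha : ∀ i, n ≤ i → a i = 0)
    (hu : ∀ k i, n ≤ i → u k i = 0) (k : ℕ) {i : ℕ} (hi : n ≤ i) : observerState x a u k i = 0 := by
  induction k generalizing i with
  | zero => exact hx i hi
  | succ k ih =>
    simp only [observerState, ih (hi.trans i.le_succ), ha i hi, hu k i hi, zero_smul, sub_zero,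
      add_zero]

lemma observerState_output_recurrence (k m : ℕ) :
    observerState x a u (k + m) 0 +
        ∑ l ∈ Finset.range m, a (m - (l + 1)) • observerState x a u (k + l) 0 =
      observerState x a u k m + ∑ l ∈ Finset.range m, u (k + l) (m - (l + 1)) := by
  induction m generalizing k with
  | zero => simp
  | succ m ih =>
    simp only [Finset.sum_range_succ', Nat.add_sub_add_right, ← Nat.add_assoc,
      Nat.add_right_comm k _ 1, Nat.add_zero, Nat.sub_zero]
    rw [← add_assoc, ih (k + 1)]
    simp only [observerState]
    abel

end ObserverState

section Derivative

variable {𝕜 E : Type*} [NontriviallyNormedField 𝕜] [NormedAddCommGroup E] [NormedSpace 𝕜 E]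

lemma hasFDerivAt_observerState {x a b : E → ℕ → 𝕜} {x' a' b' : ℕ → E →L[𝕜] 𝕜} {p : E}
    (hx : ∀ i, HasFDerivAt (fun q => x q i) (x' i) p)
    (ha : ∀ i, HasFDerivAt (fun q => a q i) (a' i) p)
    (hb : ∀ i, HasFDerivAt (fun q => b q i) (b' i) p) (w : ℕ → 𝕜) (k i : ℕ) :
    HasFDerivAt (fun q => observerState (x q) (a q) (fun k i => w k • b q i) k i)
      (observerState x' (a p) (fun k i => w k • b' i -
        observerState (x p) (a p) (fun k i => w k • b p i) k 0 • a' i) k i) p := by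
  induction k generalizing i with
  | zero => exact hx i
  | succ k ih =>
    refine (((ih (i + 1)).sub ((ha i).smul (ih 0))).add ((hb i).const_smul (w k))).congr_fderiv ?_
    ext d
    simp [observerState]
    ring

end Derivative

section CanonicalForm

variable {n : ℕ}

lemma zeroExtend_Acan_mulVec (θa u : Fin n → ℝ) (i : ℕ) :
    zeroExtend (Acan n θa *ᵥ u) i = zeroExtend u (i + 1) - zeroExtend θa i * zeroExtend u 0 := by
  rcases lt_or_ge i n with hi | hi
  · have hentry : ∀ j, Acan n θa ⟨i, hi⟩ j =
        (if (j : ℕ) = i + 1 then 1 else 0) - θa ⟨i, hi⟩ * (if (j : ℕ) = 0 then 1 else 0) := by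
      intro j
      by_cases hj : (j : ℕ) = 0 <;> simp [Acan, hj]
    simp only [zeroExtend_of_lt _ hi, Matrix.mulVec, dotProduct, hentry, sub_mul, mul_assoc,
      Finset.sum_sub_distrib, ← Finset.mul_sum, sum_ite_val_eq_mul]
  · simp [zeroExtend_of_le, hi, hi.trans i.le_succ]

lemma zeroExtend_Hcan_mulVec {r : ℕ} (θa u : Fin n → ℝ) {k : ℕ} (hk : k < r) :
    zeroExtend (Hcan n r θa *ᵥ u) k = zeroExtend ((Acan n θa ^ k) *ᵥ u) 0 := by
  rw [zeroExtend_of_lt _ hk, ← sum_ite_val_eq_mul]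
  exact (Matrix.dotProduct_mulVec (e1 n) (Acan n θa ^ k) u).symm

lemma shiftMat_mulVec_apply {r : ℕ} (u : Fin r → ℝ) (i : Fin r) :
    (shiftMat r *ᵥ u) i = if 1 ≤ (i : ℕ) then zeroExtend u (i - 1) else 0 := by
  simp only [Matrix.mulVec, dotProduct, shiftMat]
  split_ifs with hi
  · rw [← sum_ite_val_eq_mul]
    congr! 3
    omega
  · exact Finset.sum_eq_zero fun j _ => by rw [if_neg (by omega), zero_mul]

lemma shiftMat_pow_mulVec_apply {r : ℕ} (m : ℕ) (u : Fin r → ℝ) (i : Fin r) :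
    ((shiftMat r ^ m) *ᵥ u) i = if m ≤ (i : ℕ) then zeroExtend u (i - m) else 0 := by
  induction m generalizing u with
  | zero => simp
  | succ m ih =>
    have hlt : (i : ℕ) - m < r := by omega
    rw [pow_succ, ← Matrix.mulVec_mulVec, ih, zeroExtend_of_lt _ hlt, shiftMat_mulVec_apply,
      ← ite_and, Nat.sub_sub]
    exact if_congr (by simp only; omega) rfl rfl

/-- The state sequence of the canonical form `(A(θ_a), B(θ_b), C)` with initial state `x` and input
`w`; its `0`-th coordinate is the output. -/
noncomputable def canState (x θa θb : Fin n → ℝ) (w : ℕ → ℝ) : ℕ → ℕ → ℝ :=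
  observerState (zeroExtend x) (zeroExtend θa) fun k i => w k • zeroExtend θb i

lemma canState_eq_variation_of_constants (x θa θb : Fin n → ℝ) (w : ℕ → ℝ) (k i : ℕ) :
    canState x θa θb w k i = zeroExtend ((Acan n θa ^ k) *ᵥ x +
      ∑ j ∈ Finset.range k, w j • ((Acan n θa ^ (k - (j + 1))) *ᵥ θb)) i := by
  induction k generalizing i with
  | zero => simp [canState, observerState]
  | succ k ih =>
    have hstep : (Acan n θa ^ (k + 1)) *ᵥ x +
        ∑ j ∈ Finset.range (k + 1), w j • ((Acan n θa ^ (k + 1 - (j + 1))) *ᵥ θb) =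
        Acan n θa *ᵥ ((Acan n θa ^ k) *ᵥ x +
          ∑ j ∈ Finset.range k, w j • ((Acan n θa ^ (k - (j + 1))) *ᵥ θb)) + w k • θb := by
      rw [Finset.sum_range_succ, Nat.sub_self, pow_zero, Matrix.one_mulVec, Matrix.mulVec_add,
        Matrix.mulVec_mulVec, ← pow_succ', Matrix.mulVec_sum, ← add_assoc]
      congr 2
      refine Finset.sum_congr rfl fun j hj => ?_
      have hj := Finset.mem_range.mp hj
      rw [Matrix.mulVec_smul, Matrix.mulVec_mulVec, ← pow_succ',
        show k + 1 - (j + 1) = k - (j + 1) + 1 by omega]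
    rw [hstep, map_add, Pi.add_apply, zeroExtend_Acan_mulVec, ← ih, ← ih, map_smul]
    rfl

lemma HHcan_apply (r : ℕ) (x θa θb : Fin n → ℝ) (v : Fin (r - 1) → ℝ) (k : Fin r) :
    HHcan n r x θa θb v k = canState x θa θb (zeroExtend v) k 0 := by
  have hk := k.isLt
  have hterm : ∀ j < (k : ℕ), zeroExtend (Hcan n r θa *ᵥ θb) (k - (j + 1)) =
      zeroExtend ((Acan n θa ^ (k - (j + 1))) *ᵥ θb) 0 :=
    fun j hj => zeroExtend_Hcan_mulVec θa θb (by omega)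
  rw [canState_eq_variation_of_constants]
  simp only [HHcan, Pi.add_apply, map_add, map_sum, map_smul, Finset.sum_apply, Pi.smul_apply,
    shiftMat_pow_mulVec_apply]
  rw [← zeroExtend_val (Hcan n r θa *ᵥ x), zeroExtend_Hcan_mulVec θa x hk]
  simp only [← zeroExtend_val v]
  rw [Fin.sum_univ_eq_sum_range (fun j => zeroExtend v j •
    if j + 1 ≤ (k : ℕ) then zeroExtend (Hcan n r θa *ᵥ θb) (k - (j + 1)) else 0) (r - 1)]
  congr 1
  refine (Finset.sum_subset_zero_on_sdiff (Finset.range_mono (by omega)) ?_ ?_).symm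
  · intro j hj
    rw [Finset.mem_sdiff, Finset.mem_range, Finset.mem_range] at hj
    rw [if_neg (by omega), smul_zero]
  · intro j hj
    have hj := Finset.mem_range.mp hj
    rw [if_pos (Nat.succ_le_of_lt hj), hterm j hj]

/-- The derivative of `canState` in the direction `(vx, vθa, vθb)`: a state sequence of the same
canonical form, with initial state `vx` and driven by `w` through `vθb` and by the negated output
through `vθa`. -/
noncomputable def canStateTangent (x θa θb : Fin n → ℝ) (w : ℕ → ℝ) (vx vθa vθb : Fin n → ℝ) :
    ℕ → ℕ → ℝ :=
  observerState (zeroExtend vx) (zeroExtend θa) fun k i =>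
    w k • zeroExtend vθb i - canState x θa θb w k 0 • zeroExtend vθa i

lemma fderiv_HHcan_apply (r : ℕ) (x θa θb : Fin n → ℝ) (v : Fin (r - 1) → ℝ)
    (vx vθa vθb : Fin n → ℝ) (k : Fin r) :
    fderiv ℝ (fun p : (Fin n → ℝ) × (Fin n → ℝ) × (Fin n → ℝ) => HHcan n r p.1 p.2.1 p.2.2 v)
      (x, θa, θb) (vx, vθa, vθb) k =
      canStateTangent x θa θb (zeroExtend v) vx vθa vθb k 0 := by
  let V := Fin n → ℝ
  let coord (L : V × V × V →L[ℝ] V) (i : ℕ) : V × V × V →L[ℝ] ℝ :=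
    (LinearMap.proj i ∘ₗ zeroExtend).toContinuousLinearMap ∘L L
  let toX := ContinuousLinearMap.fst ℝ V (V × V)
  let toθa := ContinuousLinearMap.fst ℝ V V ∘L ContinuousLinearMap.snd ℝ V (V × V)
  let toθb := ContinuousLinearMap.snd ℝ V V ∘L ContinuousLinearMap.snd ℝ V (V × V)
  have hderiv := hasFDerivAt_pi.mpr fun k : Fin r => hasFDerivAt_observerState (p := (x, θa, θb))
    (fun i => (coord toX i).hasFDerivAt) (fun i => (coord toθa i).hasFDerivAt)
    (fun i => (coord toθb i).hasFDerivAt) (zeroExtend v) k 0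
  have hHH := hderiv.congr_of_eventuallyEq
    (.of_forall fun p => funext (HHcan_apply r p.1 p.2.1 p.2.2 v))
  rw [hHH.fderiv]
  exact map_observerState (ContinuousLinearMap.apply ℝ ℝ (vx, vθa, vθb)).toLinearMap k 0

lemma colB_apply (θb : Fin n → ℝ) (l : Fin (2 * n)) : colB n θb l = (revPoly θb).coeff l :=
  (revPoly_coeff θb l).symm

lemma colA_apply (θa : Fin n → ℝ) (l : Fin (2 * n)) :
    colA n θa l = (X ^ n + revPoly θa).coeff l := by
  rw [coeff_add, coeff_X_pow, revPoly_coeff, colA]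
  rcases lt_or_ge (l : ℕ) n with hl | hl
  · simp [hl, hl.ne]
  · simp [hl.not_gt]

lemma sylvesterMat_eq_reindex_sylvester (θa θb : Fin n → ℝ) :
    sylvesterMat n θa θb = (sylvester (X ^ n + revPoly θa) (revPoly θb) n n).reindex
      (finCongr (two_mul n).symm) (finCongr (two_mul n).symm) := by
  ext i j
  obtain ⟨j, rfl⟩ := (finCongr (two_mul n).symm).surjective j
  have hA := (natDegree_X_pow_add_revPoly θa).le
  have hB := natDegree_le_of_degree_le (degree_revPoly_lt θb).le
  rw [Matrix.reindex_apply, Matrix.submatrix_apply, Equiv.symm_apply_apply]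
  refine j.addCases (fun j => ?_) (fun j => ?_)
  · simp [sylvesterMat, sylvester, colB_apply, -Set.mem_Icc, ite_mem_Icc_coeff_sub hB]
  · simp [sylvesterMat, sylvester, colA_apply, -Set.mem_Icc, ite_mem_Icc_coeff_sub hA,
      -Fin.natAdd_eq_addNat, -coeff_add]

lemma isCoprime_of_isUnit_det_sylvesterMat {θa θb : Fin n → ℝ}
    (h : IsUnit (sylvesterMat n θa θb).det) : IsCoprime (X ^ n + revPoly θa) (revPoly θb) := by
  have hmonic : (X ^ n + revPoly θa).Monic := monic_X_pow_add (degree_revPoly_lt θa)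
  have hB := natDegree_le_of_degree_le (degree_revPoly_lt θb).le
  rw [sylvesterMat_eq_reindex_sylvester, Matrix.det_reindex_self] at h
  rw [← isUnit_resultant_iff_isCoprime hmonic, ← resultant_eq_of_natDegree_le hmonic hB,
    natDegree_X_pow_add_revPoly]
  exact h

lemma hankelOf_eq_seqHankel {a b : ℕ} (v : Fin b → ℝ) :
    hankelOf a b v = seqHankel a (zeroExtend v) := by
  ext i j
  rw [hankelOf, seqHankel, Matrix.of_apply]
  split_ifs with h
  · rw [zeroExtend_of_lt v h]
  · rw [zeroExtend_of_le v (not_lt.mp h)]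

lemma aeval_seqShift_canState_output (x θa θb : Fin n → ℝ) (w : ℕ → ℝ) :
    aeval (seqShift ℝ) (X ^ n + revPoly θa) (fun k => canState x θa θb w k 0) =
      aeval (seqShift ℝ) (revPoly θb) w := by
  ext k
  have hrec := observerState_output_recurrence (x := zeroExtend x) (a := zeroExtend θa)
    (u := fun k i => w k • zeroExtend θb i) k n
  rw [observerState_eq_zero_of_le (fun i => zeroExtend_of_le x) (fun i => zeroExtend_of_le θa)
    (fun k i hi => by rw [zeroExtend_of_le θb hi, smul_zero]) k le_rfl, zero_add] at hrec
  rw [map_add, map_pow, aeval_X, LinearMap.add_apply, Pi.add_apply, seqShift_pow_apply,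
    aeval_seqShift_revPoly, aeval_seqShift_revPoly]
  exact hrec.trans (Finset.sum_congr rfl fun l _ => mul_comm _ _)

section Tangent

variable {x θa θb vx vθa vθb : Fin n → ℝ} {w : ℕ → ℝ} {N : ℕ}

lemma canStateTangent_eq_of_output_eq_zero
    (h : ∀ k < N, canStateTangent x θa θb w vx vθa vθb k 0 = 0) {k m : ℕ} (hkm : k + m < N) :
    canStateTangent x θa θb w vx vθa vθb k m =
      ∑ l ∈ Finset.range m, (canState x θa θb w (k + l) 0 * zeroExtend vθa (m - (l + 1)) -
        w (k + l) * zeroExtend vθb (m - (l + 1))) := by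
  have hrec := observerState_output_recurrence (x := zeroExtend vx) (a := zeroExtend θa)
    (u := fun k i => w k • zeroExtend vθb i - canState x θa θb w k 0 • zeroExtend vθa i) k m
  have hsum : ∑ l ∈ Finset.range m, zeroExtend θa (m - (l + 1)) •
      canStateTangent x θa θb w vx vθa vθb (k + l) 0 = 0 :=
    Finset.sum_eq_zero fun l hl => by
      rw [h _ (by have := Finset.mem_range.mp hl; omega), smul_zero]
  rw [← canStateTangent, h _ hkm, hsum, add_zero] at hrec
  rw [eq_neg_of_add_eq_zero_left hrec.symm, ← Finset.sum_neg_distrib]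
  exact Finset.sum_congr rfl fun l _ => neg_sub _ _

lemma aeval_seqShift_revPoly_of_canStateTangent_output_eq_zero
    (h : ∀ k < N, canStateTangent x θa θb w vx vθa vθb k 0 = 0) {k : ℕ} (hk : k + n < N) :
    aeval (seqShift ℝ) (revPoly vθa) (fun k => canState x θa θb w k 0) k =
      aeval (seqShift ℝ) (revPoly vθb) w k := by
  have hvanish : canStateTangent x θa θb w vx vθa vθb k n = 0 :=
    observerState_eq_zero_of_le (fun i => zeroExtend_of_le vx) (fun i => zeroExtend_of_le θa)
      (fun k i hi => by simp only [zeroExtend_of_le _ hi, smul_zero, sub_zero]) k le_rfl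
  rw [canStateTangent_eq_of_output_eq_zero h hk, Finset.sum_sub_distrib, sub_eq_zero] at hvanish
  simpa only [aeval_seqShift_revPoly, mul_comm] using hvanish

lemma initialState_eq_zero_of_canStateTangent_output_eq_zero (hN : n ≤ N)
    (h : ∀ k < N, canStateTangent x θa θb w vx 0 0 k 0 = 0) : vx = 0 := by
  ext i
  have hi := canStateTangent_eq_of_output_eq_zero h (k := 0) (m := i) (by omega)
  simpa [canStateTangent, observerState] using hi

end Tangent

end CanonicalForm

/-- full rank of the Jacobian of `𝓗` for the canonical form ;
Part 2 of the proof of Proposition 4: the differential of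
`(x, θ) ↦ 𝓗(x, θ, v)` is injective. -/
theorem jacobian_full_rank_canonical
    (n : ℕ) (hn : 0 < n)
    (θa θb x : Fin n → ℝ) (v : Fin (4 * n - 1) → ℝ)
    (hHankel : IsUnit (hankelOf (2 * n) (4 * n - 1) v).det)
    (hSylv : IsUnit (sylvesterMat n θa θb).det) :
    ∀ (vx vθa vθb : Fin n → ℝ),
      fderiv ℝ (fun p : (Fin n → ℝ) × (Fin n → ℝ) × (Fin n → ℝ) =>
          HHcan n (4 * n) p.1 p.2.1 p.2.2 v) (x, θa, θb) (vx, vθa, vθb) = 0 →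
      vx = 0 ∧ vθa = 0 ∧ vθb = 0 := by
  intro vx vθa vθb hD
  have htangent : ∀ k < 4 * n, canStateTangent x θa θb (zeroExtend v) vx vθa vθb k 0 = 0 := by
    intro k hk
    rw [← fderiv_HHcan_apply (4 * n) x θa θb v vx vθa vθb ⟨k, hk⟩, hD, Pi.zero_apply]
  obtain ⟨hp, hq⟩ : revPoly vθa = 0 ∧ revPoly vθb = 0 :=
    eq_zero_of_perturbed_difference_equation (monic_X_pow_add (degree_revPoly_lt θa))
      (natDegree_X_pow_add_revPoly θa) (degree_revPoly_lt θb)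
      (isCoprime_of_isUnit_det_sylvesterMat hSylv) (degree_revPoly_lt vθa) (degree_revPoly_lt vθb)
      (hankelOf_eq_seqHankel v ▸ hHankel) (aeval_seqShift_canState_output x θa θb (zeroExtend v))
      fun k hk => aeval_seqShift_revPoly_of_canStateTangent_output_eq_zero htangent (by omega)
  rw [revPoly_eq_zero_iff] at hp hq
  subst hp hq
  exact ⟨initialState_eq_zero_of_canStateTangent_output_eq_zero (by omega) htangent, rfl, rfl⟩
end

section
/- Multisine signals are differentially exciting. Let r ≥ 1, let ω_1, …, ω_r be distinct positive real numbers and α_1, …, α_r nonzero real numbers, and let u(t) = Σ_{i=1}^r α_i sin(ω_i t). Then u is differentially exciting of order 2r−1 at every time t: the 2r×2r Hankel matrix 𝔐_{2r−1}(ū^{(4r−2)}(t)) is invertible for all t ∈ R. -/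
open scoped BigOperators

/-!
Over `ℂ` a multisine with `r` distinct positive frequencies is a combination `∑ cₖ exp (λₖ t)` of
`2 r` exponentials with nonzero coefficients and distinct exponents `λₖ`. Its `m`-th derivative is
`∑ (cₖ exp (λₖ t)) λₖᵐ`, so the Hankel matrix of its derivatives at `t` factors as `Vᵀ D V`, where
`V` is the Vandermonde matrix of the exponents and `D` is the diagonal matrix of the nonzero numbers
`cₖ exp (λₖ t)`. Both `V` and `D` are invertible.
-/

section Hankel

open Matrix

variable {R : Type*}

/-- The `n × n` Hankel matrix of a sequence, used for the sequence of derivatives of a signal.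
The paper's `𝔐_m` has size `m + 1`; indexing by the size avoids the subtraction in `2 r - 1`. -/
def hankel (n : ℕ) (v : ℕ → R) : Matrix (Fin n) (Fin n) R :=
  Matrix.of fun i j => v (i + j)

lemma map_det_hankel {S : Type*} [CommRing R] [CommRing S] (f : R →+* S) (n : ℕ) (v : ℕ → R) :
    f (hankel n v).det = (hankel n fun m => f (v m)).det :=
  f.map_det _

variable [CommRing R] {n : ℕ}

lemma hankel_sum_mul_pow (c x : Fin n → R) :
    hankel n (fun m => ∑ k, c k * x k ^ m) = (vandermonde x)ᵀ * diagonal c * vandermonde x := by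
  ext i j
  simp only [hankel, of_apply, mul_apply (N := vandermonde x), mul_diagonal, transpose_apply,
    vandermonde_apply]
  exact Finset.sum_congr rfl fun k _ => by ring

lemma det_hankel_sum_mul_pow (c x : Fin n → R) :
    (hankel n fun m => ∑ k, c k * x k ^ m).det = (∏ k, c k) * (vandermonde x).det ^ 2 := by
  rw [hankel_sum_mul_pow, det_mul, det_mul, det_transpose, det_diagonal]
  ring

lemma det_hankel_sum_mul_pow_ne_zero [IsDomain R] {κ : Type*} [Fintype κ]
    (hn : n = Fintype.card κ) {c x : κ → R} (hc : ∀ k, c k ≠ 0) (hx : Function.Injective x) :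
    (hankel n fun m => ∑ k, c k * x k ^ m).det ≠ 0 := by
  let e : Fin n ≃ κ := (Fintype.equivFinOfCardEq hn.symm).symm
  simp only [← e.sum_comp fun k => c k * x k ^ _]
  rw [det_hankel_sum_mul_pow (fun i => c (e i)) (fun i => x (e i))]
  exact mul_ne_zero (Finset.prod_ne_zero_iff.mpr fun k _ => hc (e k))
    (pow_ne_zero 2 (det_vandermonde_ne_zero_iff.mpr (hx.comp e.injective)))

end Hankel

section IteratedDeriv

open Complex

lemma iteratedDeriv_clm_comp {𝕜 F G : Type*} [NontriviallyNormedField 𝕜]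
    [NormedAddCommGroup F] [NormedSpace 𝕜 F] [NormedAddCommGroup G] [NormedSpace 𝕜 G]
    (L : F →L[𝕜] G) {f : 𝕜 → F} {t : 𝕜} {m : ℕ} (hf : ContDiffAt 𝕜 m f t) :
    iteratedDeriv m (fun s => L (f s)) t = L (iteratedDeriv m f t) := by
  simp only [iteratedDeriv_eq_iteratedFDeriv]
  exact congrArg (fun A => A fun _ => 1) (L.iteratedFDeriv_comp_left hf le_rfl)

lemma iteratedDeriv_cexp_const_mul_ofReal (m : ℕ) (a : ℂ) :
    iteratedDeriv m (fun s : ℝ => exp (a * s)) = fun s : ℝ => a ^ m * exp (a * s) := by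
  induction m with
  | zero => simp
  | succ m ih =>
    rw [iteratedDeriv_succ, ih]
    funext t
    have h : HasDerivAt (fun s : ℝ => a * (s : ℂ)) a t := by
      simpa using (hasDerivAt_id (t : ℂ)).comp_ofReal.const_mul a
    rw [(h.cexp.const_mul (a ^ m)).deriv]
    ring

variable {κ : Type*} [Fintype κ]

lemma iteratedDeriv_sum_cexp (c a : κ → ℂ) (m : ℕ) (t : ℝ) :
    iteratedDeriv m (fun s : ℝ => ∑ k, c k * exp (a k * s)) t
      = ∑ k, c k * exp (a k * t) * a k ^ m := by
  have h_smooth (k : κ) : ContDiff ℝ m fun s : ℝ => c k * exp (a k * s) :=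
    contDiff_const.mul (contDiff_const.mul ofRealCLM.contDiff).cexp
  rw [iteratedDeriv_fun_sum fun k _ => (h_smooth k).contDiffAt]
  refine Finset.sum_congr rfl fun k _ => ?_
  rw [iteratedDeriv_const_mul_field, iteratedDeriv_cexp_const_mul_ofReal]
  ring

lemma det_hankel_iteratedDeriv_sum_cexp_ne_zero {n : ℕ} (hn : n = Fintype.card κ)
    {c a : κ → ℂ} (hc : ∀ k, c k ≠ 0) (ha : Function.Injective a) (t : ℝ) :
    (hankel n fun m =>
      iteratedDeriv m (fun s : ℝ => ∑ k, c k * exp (a k * s)) t).det ≠ 0 := by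
  simp only [iteratedDeriv_sum_cexp]
  exact det_hankel_sum_mul_pow_ne_zero hn (fun k => mul_ne_zero (hc k) (exp_ne_zero _)) ha

end IteratedDeriv

section Multisine

open Complex

variable {ι : Type*}

/-- The coefficient of `exp (± i ω t)` in `α * sin (ω * t + φ)`. The two exponentials of each
sine are labelled by their sign, an element of `ℤˣ`. -/
noncomputable def multisineCoeff (α φ : ι → ℝ) (p : ι × ℤˣ) : ℂ :=
  -(p.2 * α p.1 * I / 2) * exp (p.2 * φ p.1 * I)

/-- The exponent `± i ω` of an exponential occurring in a multisine, labelled as in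
`multisineCoeff`. -/
noncomputable def multisineExponent (ω : ι → ℝ) (p : ι × ℤˣ) : ℂ :=
  p.2 * ω p.1 * I

lemma multisineCoeff_ne_zero {α : ι → ℝ} (hα : ∀ k, α k ≠ 0) (φ : ι → ℝ) (p : ι × ℤˣ) :
    multisineCoeff α φ p ≠ 0 := by
  simp [multisineCoeff, hα p.1]

lemma multisineExponent_injective {ω : ι → ℝ} (hω₀ : ∀ k, ω k ≠ 0)
    (hω : Function.Injective fun k => |ω k|) : Function.Injective (multisineExponent ω) := by
  rintro ⟨k, ε⟩ ⟨l, δ⟩ h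
  have h_signed : (ε : ℝ) * ω k = δ * ω l := by
    simpa [multisineExponent] using congrArg im h
  have h_abs (η : ℤˣ) : |(η : ℝ)| = 1 := by
    rw [← Int.cast_abs, Int.isUnit_iff_abs_eq.mp η.isUnit, Int.cast_one]
  obtain rfl : k = l := hω <| by
    simpa only [abs_mul, h_abs, one_mul] using congrArg abs h_signed
  have h_sign : (ε : ℝ) = δ := mul_right_cancel₀ (hω₀ k) h_signed
  rw [Units.ext (Int.cast_injective h_sign)]

variable [Fintype ι]

lemma ofReal_multisine (α ω φ : ι → ℝ) (s : ℝ) :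
    ((∑ k, α k * Real.sin (ω k * s + φ k) : ℝ) : ℂ)
      = ∑ p, multisineCoeff α φ p * exp (multisineExponent ω p * s) := by
  rw [Fintype.sum_prod_type, ofReal_sum]
  refine Finset.sum_congr rfl fun k _ => ?_
  have h_exp (ε : ℤˣ) : multisineCoeff α φ (k, ε) * exp (multisineExponent ω (k, ε) * s)
      = -(ε * α k * I / 2) * exp (ε * (ω k * s + φ k) * I) := by
    rw [multisineCoeff, multisineExponent, mul_assoc, ← exp_add]
    ring_nf
  simp only [h_exp, UnitsInt.univ]
  rw [Finset.sum_pair (by decide)]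
  push_cast
  rw [Complex.sin]
  ring_nf

theorem multisine_differentially_exciting_general {n : ℕ} (hn : n = 2 * Fintype.card ι)
    {ω : ι → ℝ} (hω₀ : ∀ k, ω k ≠ 0) (hω : Function.Injective fun k => |ω k|)
    {α : ι → ℝ} (hα : ∀ k, α k ≠ 0) (φ : ι → ℝ) (t : ℝ) :
    IsUnit (hankel n fun m =>
      iteratedDeriv m (fun s : ℝ => ∑ k, α k * Real.sin (ω k * s + φ k)) t).det := by
  have h_card : n = Fintype.card (ι × ℤˣ) := by simp [hn, mul_comm]
  have h_deriv (m : ℕ) :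
      ((iteratedDeriv m (fun s : ℝ => ∑ k, α k * Real.sin (ω k * s + φ k)) t : ℝ) : ℂ)
        = iteratedDeriv m (fun s : ℝ =>
            ∑ p, multisineCoeff α φ p * exp (multisineExponent ω p * s)) t := by
    simp only [← ofReal_multisine]
    exact (iteratedDeriv_clm_comp ofRealCLM (by fun_prop)).symm
  rw [isUnit_iff_ne_zero, ← map_ne_zero ofRealHom, map_det_hankel]
  simp only [ofRealHom_eq_coe, h_deriv]
  exact det_hankel_iteratedDeriv_sum_cexp_ne_zero h_card (multisineCoeff_ne_zero hα φ)
    (multisineExponent_injective hω₀ hω) t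

end Multisine

/-- multisine signals are differentially exciting.
If `ω₁, …, ω_r` are distinct positive reals and `α₁, …, α_r` are nonzero, then
`u(t) = Σ_{i=1}^r αᵢ sin(ωᵢ t)` is differentially exciting of order `2r−1` at every
time `t` : the `2r × 2r` Hankel matrix with entries `u^{(i+j)}(t)` is invertible. -/
theorem multisine_differentially_exciting
    (r : ℕ) (hr : 1 ≤ r)
    (ω : Fin r → ℝ) (hωpos : ∀ i, 0 < ω i) (hωdist : Function.Injective ω)
    (α : Fin r → ℝ) (hα : ∀ i, α i ≠ 0) :
    ∀ t : ℝ, IsUnit (Matrix.det (Matrix.of fun i j : Fin (2 * r) =>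
      iteratedDeriv ((i : ℕ) + (j : ℕ))
        (fun s : ℝ => ∑ k, α k * Real.sin (ω k * s)) t)) := by
  intro t
  simpa only [hankel, Pi.zero_apply, add_zero] using
    multisine_differentially_exciting_general (by simp) (fun k => (hωpos k).ne')
      (by simpa only [abs_of_pos (hωpos _)] using hωdist) hα 0 t
end

section
/- Implicit linear representation of T for the canonical form (equation (33)). Let θ = (θ_a, θ_b) ∈ R^n × R^n and let λ < 0 be a real number that is not an eigenvalue of A(θ_a). Set V_λ = −(1/λ, 1/λ², …, 1/λ^n)^T ∈ R^n and T_λ(x, θ, w) = C (A(θ_a) − λ I_n)^{-1}(x − θ_b w) for x ∈ R^n, w ∈ R. Then for all x ∈ R^n and w ∈ R: T_λ(x, θ, w) = V_λ^T x + T_λ(x, θ, w) · (V_λ^T θ_a) − w · (V_λ^T θ_b); equivalently, (1 − V_λ^T θ_a) T_λ(x, θ, w) = V_λ^T x − w V_λ^T θ_b. -/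
open scoped Matrix BigOperators

/-- `V_λ = −(1/λ, 1/λ², …, 1/λ^n)ᵀ`. -/
noncomputable def Vlam (n : ℕ) (lam : ℝ) : Fin n → ℝ :=
  fun i => -(1 / lam ^ ((i : ℕ) + 1))

/-!
The matrix `A(a)` acts on row vectors from the right as a shift whose new leading entry is `-v · a`.
As `V_λ` is a geometric progression of ratio `λ⁻¹`, it is, up to that leading entry, a left
eigenvector: `V_λᵀ (A(a) - λ) = (1 - V_λᵀ a) e₁ᵀ`. Multiplying by the resolvent on the right and
pairing with `x - w b` gives `V_λᵀ (x - w b) = (1 - V_λᵀ a) T_λ(x, w)`.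
-/

section CanonicalForm

variable {R : Type*} {n : ℕ}

/-- The row vector `e₁ᵀ` with entries in `R`. Testing `(j : ℕ) = 0`, rather than using `Pi.single`,
lets `n = 0` be included. -/
def firstBasisRow (R : Type*) [Zero R] [One R] (n : ℕ) : Fin n → R :=
  fun j => if (j : ℕ) = 0 then 1 else 0

/-- The matrix of the observer canonical form with entries in `R`, with first column `-a` and
ones on the superdiagonal. -/
def observerCanonicalMatrix [Zero R] [One R] [Neg R] (a : Fin n → R) :
    Matrix (Fin n) (Fin n) R :=
  fun i j => if (j : ℕ) = 0 then -a i else if (j : ℕ) = (i : ℕ) + 1 then 1 else 0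

/-- The vector `V_λ` with entries in `R`, the negated powers of `λ⁻¹`. The parameter is a unit,
so that the inverse is a genuine one. -/
def negInvPowers [Monoid R] [Neg R] (n : ℕ) (lam : Rˣ) : Fin n → R :=
  fun i => -((lam⁻¹ ^ ((i : ℕ) + 1) : Rˣ) : R)

section Ring

variable [Ring R]

theorem vecMul_observerCanonicalMatrix_of_eq_zero (v a : Fin n → R) {j : Fin n}
    (hj : (j : ℕ) = 0) : (v ᵥ* observerCanonicalMatrix a) j = -(v ⬝ᵥ a) := by
  simp [Matrix.vecMul, dotProduct, observerCanonicalMatrix, hj]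

theorem vecMul_observerCanonicalMatrix_of_eq_succ (v a : Fin n → R) {i j : Fin n}
    (hij : (j : ℕ) = i + 1) : (v ᵥ* observerCanonicalMatrix a) j = v i := by
  simp [Matrix.vecMul, dotProduct, observerCanonicalMatrix, hij, ← Fin.ext_iff]

theorem negInvPowers_mul_of_eq_zero (lam : Rˣ) {j : Fin n} (hj : (j : ℕ) = 0) :
    negInvPowers n lam j * lam = -1 := by
  simp [negInvPowers, hj]

theorem negInvPowers_mul_of_eq_succ (lam : Rˣ) {i j : Fin n} (hij : (j : ℕ) = i + 1) :
    negInvPowers n lam j * lam = negInvPowers n lam i := by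
  simp [negInvPowers, hij, pow_succ _ ((i : ℕ) + 1)]

theorem negInvPowers_vecMul_observerCanonicalMatrix_sub (a : Fin n → R) (lam : Rˣ) :
    negInvPowers n lam ᵥ* (observerCanonicalMatrix a - (lam : R) • 1) =
      (1 - negInvPowers n lam ⬝ᵥ a) • firstBasisRow R n := by
  ext j
  rw [Matrix.vecMul_sub, Pi.sub_apply, Matrix.smul_one_eq_diagonal, Matrix.vecMul_diagonal,
    Pi.smul_apply, smul_eq_mul]
  by_cases hj : (j : ℕ) = 0
  · rw [vecMul_observerCanonicalMatrix_of_eq_zero _ _ hj, negInvPowers_mul_of_eq_zero _ hj,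
      firstBasisRow, if_pos hj, mul_one]
    abel
  · obtain ⟨i, hij⟩ : ∃ i : Fin n, (j : ℕ) = i + 1 :=
      ⟨⟨j - 1, by omega⟩, (Nat.sub_one_add_one hj).symm⟩
    rw [vecMul_observerCanonicalMatrix_of_eq_succ _ _ hij, negInvPowers_mul_of_eq_succ _ hij,
      firstBasisRow, if_neg hj, sub_self, mul_zero]

end Ring

variable [CommRing R]

theorem dotProduct_eq_mul_vecMul_inv_dotProduct {ι : Type*} [Fintype ι] [DecidableEq ι]
    {M : Matrix ι ι R} (hM : IsUnit M.det) {u v : ι → R} {c : R} (h : v ᵥ* M = c • u)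
    (y : ι → R) : v ⬝ᵥ y = c * (u ᵥ* M⁻¹ ⬝ᵥ y) :=
  calc
    v ⬝ᵥ y = (v ᵥ* M) ᵥ* M⁻¹ ⬝ᵥ y := by
      rw [Matrix.vecMul_vecMul, Matrix.mul_nonsing_inv _ hM, Matrix.vecMul_one]
    _ = c * (u ᵥ* M⁻¹ ⬝ᵥ y) := by rw [h, Matrix.smul_vecMul, smul_dotProduct, smul_eq_mul]

theorem implicit_linear_representation_T_general (a b : Fin n → R) (lam : Rˣ)
    (hinv : IsUnit (observerCanonicalMatrix a - (lam : R) • 1).det) (T : (Fin n → R) → R → R)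
    (hT : ∀ x w, T x w =
      firstBasisRow R n ᵥ* (observerCanonicalMatrix a - (lam : R) • 1)⁻¹ ⬝ᵥ (x - w • b))
    (x : Fin n → R) (w : R) :
    T x w = negInvPowers n lam ⬝ᵥ x + T x w * (negInvPowers n lam ⬝ᵥ a)
      - w * (negInvPowers n lam ⬝ᵥ b) := by
  have resolvent_identity :
      negInvPowers n lam ⬝ᵥ (x - w • b) = (1 - negInvPowers n lam ⬝ᵥ a) * T x w := by
    rw [hT]
    exact dotProduct_eq_mul_vecMul_inv_dotProduct hinv
      (negInvPowers_vecMul_observerCanonicalMatrix_sub a lam) _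
  rw [dotProduct_sub, dotProduct_smul, smul_eq_mul] at resolvent_identity
  linear_combination -resolvent_identity

end CanonicalForm

theorem Vlam_eq_negInvPowers_mk0 (n : ℕ) {lam : ℝ} (hlam : lam ≠ 0) :
    Vlam n lam = negInvPowers n (Units.mk0 lam hlam) := by
  ext i
  simp [Vlam, negInvPowers]

/-- implicit linear representation of `T` for the canonical form,
equation (33): with `T_λ(x,θ,w) = C (A(θ_a) − λIₙ)⁻¹ (x − θ_b w)`,
`T_λ(x,θ,w) = V_λᵀ x + T_λ(x,θ,w) (V_λᵀ θ_a) − w (V_λᵀ θ_b)`. -/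
theorem implicit_linear_representation_T
    (n : ℕ) (θa θb : Fin n → ℝ) (lam : ℝ) (hlam : lam < 0)
    (hinv : IsUnit (Acan n θa - lam • (1 : Matrix (Fin n) (Fin n) ℝ)).det)
    (T : (Fin n → ℝ) → ℝ → ℝ)
    (hT : ∀ x w, T x w
      = Matrix.vecMul (e1 n) (Acan n θa - lam • (1 : Matrix (Fin n) (Fin n) ℝ))⁻¹
          ⬝ᵥ (x - w • θb)) :
    ∀ (x : Fin n → ℝ) (w : ℝ),
      T x w = Vlam n lam ⬝ᵥ x + T x w * (Vlam n lam ⬝ᵥ θa)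
        - w * (Vlam n lam ⬝ᵥ θb) := by
  rw [Vlam_eq_negInvPowers_mk0 n hlam.ne]
  exact implicit_linear_representation_T_general θa θb (Units.mk0 lam hlam.ne) hinv T hT
end

section
/- Explicit left inverse T* (Proposition 5). Consider the canonical form with θ = (θ_a, θ_b) ∈ R^{2n}. Let C_x ⊂ R^n, C_θ ⊂ R^{2n} and C_w ⊂ R^r be bounded open sets, let λ_1, …, λ_r be negative reals such that λ_i is not an eigenvalue of A(θ_a) for all θ ∈ Cl(C_θ), and let T be the associated Luenberger map. Assume there is L_T > 0 with |T(x,θ,w) − T(x*,θ*,w)| ≥ L_T |(x−x*, θ−θ*)| for all (x,θ), (x*,θ*) ∈ Cl(C_x)×Cl(C_θ) and w ∈ Cl(C_w). Then there exist positive reals p_min, ε_T and L_{T*} such that the function T*(z,w) = (P(z,w)^T P(z,w))^{-1} P(z,w)^T z when P(z,w)^T P(z,w) ⪰ p_min I_{3n}, and T*(z,w) = 0 otherwise, is well defined and satisfies: for all (x, θ, w) ∈ Cl(C_x)×Cl(C_θ)×Cl(C_w) and all z ∈ R^r with |z − T(x,θ,w)| ≤ ε_T, |T*(z,w) − (x,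 θ_a, θ_b)| ≤ L_{T*} |z − T(x,θ,w)|. -/
open scoped Matrix BigOperators

/-- The Euclidean norm of a vector in `ℝ^m`. -/
noncomputable def eNorm {m : ℕ} (x : Fin m → ℝ) : ℝ := Real.sqrt (∑ i, (x i) ^ 2)

/-- The Luenberger map for the canonical form :
`T(x,θ,w)ᵢ = e₁ᵀ (A(θ_a) − λᵢ Iₙ)⁻¹ (x − wᵢ θ_b)`. -/
noncomputable def Tcan (n r : ℕ) (lam : Fin r → ℝ) (x θa θb : Fin n → ℝ)
    (w : Fin r → ℝ) : Fin r → ℝ :=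
  fun i => Matrix.vecMul (e1 n) (Acan n θa - lam i • (1 : Matrix (Fin n) (Fin n) ℝ))⁻¹
    ⬝ᵥ (x - w i • θb)

/-- The `r × 3n` matrix `P(z,w)` with rows `Pᵢ = [V_{λᵢ}ᵀ, zᵢ V_{λᵢ}ᵀ, −wᵢ V_{λᵢ}ᵀ]`. -/
noncomputable def Pmat (n r : ℕ) (lam : Fin r → ℝ) (z w : Fin r → ℝ) :
    Matrix (Fin r) (Fin (3 * n)) ℝ :=
  fun i j =>
    if h : (j : ℕ) < n then Vlam n (lam i) ⟨(j : ℕ), h⟩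
    else if h2 : (j : ℕ) < 2 * n then z i * Vlam n (lam i) ⟨(j : ℕ) - n, by omega⟩
    else -(w i) * Vlam n (lam i) ⟨(j : ℕ) - 2 * n, by have := j.2; omega⟩

/-- The concatenation `(x, θ_a, θ_b) ∈ ℝ^{3n}`. -/
def stack3 (n : ℕ) (x θa θb : Fin n → ℝ) : Fin (3 * n) → ℝ :=
  fun j =>
    if h : (j : ℕ) < n then x ⟨(j : ℕ), h⟩
    else if h2 : (j : ℕ) < 2 * n then θa ⟨(j : ℕ) - n, by omega⟩
    else θb ⟨(j : ℕ) - 2 * n, by have := j.2; omega⟩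

open Classical in
/-- The explicit left inverse `T*(z,w)` of Proposition 5. -/
noncomputable def TstarExpl (n r : ℕ) (lam : Fin r → ℝ) (pmin : ℝ)
    (z w : Fin r → ℝ) : Fin (3 * n) → ℝ :=
  if Matrix.PosSemidef ((Pmat n r lam z w)ᵀ * Pmat n r lam z w
      - pmin • (1 : Matrix (Fin (3 * n)) (Fin (3 * n)) ℝ)) then
    (((Pmat n r lam z w)ᵀ * Pmat n r lam z w)⁻¹ * (Pmat n r lam z w)ᵀ) *ᵥ z
  else 0

/-!
For `q_λ(θ_a) = 1 − V_λᵀ θ_a`, the row `V_λᵀ` satisfies `V_λᵀ (A(θ_a) − λ I) = q_λ(θ_a) e₁ᵀ`,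
whence `q_{λᵢ}(θ_a) Tᵢ(x, θ, w) = V_{λᵢ}ᵀ (x − wᵢ θ_b)`, or equivalently, for every `z`,
`zᵢ − (P(z, w) (x, θ))ᵢ = q_{λᵢ}(θ_a) (zᵢ − Tᵢ(x, θ, w))`.

So `(x, θ)` solves the linear system `P(z, w) s = z` up to a residual of order `|z − T(x, θ, w)|`,
and `T*` is its least squares solution. Taking `z = T(x, θ, w)` and subtracting the identities at
two points turns the quantitative injectivity of `T` into a lower bound for `P(T(x, θ, w), w)` on
small vectors, hence by homogeneity on all vectors. The bound extends to the closure by continuity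
and survives a small perturbation of `z`.
-/

section LeastSquares

variable {m n : Type*} [Fintype m] [Fintype n]

lemma dotProduct_transpose_mul_self_mulVec (P : Matrix m n ℝ) (d v : n → ℝ) :
    d ⬝ᵥ (Pᵀ * P) *ᵥ v = P *ᵥ d ⬝ᵥ P *ᵥ v := by
  rw [← Matrix.mulVec_mulVec, Matrix.dotProduct_mulVec, Matrix.vecMul_transpose]

variable [DecidableEq n] {c : ℝ}

lemma posSemidef_transpose_mul_self_sub_smul_one_iff {P : Matrix m n ℝ} :
    (Pᵀ * P - c • (1 : Matrix n n ℝ)).PosSemidef ↔ ∀ d, c * (d ⬝ᵥ d) ≤ P *ᵥ d ⬝ᵥ P *ᵥ d := by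
  have hquad (d : n → ℝ) : star d ⬝ᵥ (Pᵀ * P - c • (1 : Matrix n n ℝ)) *ᵥ d
      = P *ᵥ d ⬝ᵥ P *ᵥ d - c * (d ⬝ᵥ d) := by
    rw [star_trivial, Matrix.sub_mulVec, dotProduct_sub, dotProduct_transpose_mul_self_mulVec,
      Matrix.smul_mulVec, Matrix.one_mulVec, dotProduct_smul, smul_eq_mul]
  refine ⟨fun h d ↦ sub_nonneg.1 (hquad d ▸ h.dotProduct_mulVec_nonneg d), fun h ↦ ?_⟩
  refine .of_dotProduct_mulVec_nonneg ?_ fun d ↦ hquad d ▸ sub_nonneg.2 (h d)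
  simp [Matrix.IsHermitian, Matrix.conjTranspose_eq_transpose_of_trivial]

lemma isUnit_det_of_posSemidef_sub_smul_one {G : Matrix n n ℝ} (hc : 0 < c)
    (hG : (G - c • (1 : Matrix n n ℝ)).PosSemidef) : IsUnit G.det := by
  have hpos : G.PosDef := by
    simpa using Matrix.PosDef.posSemidef_add hG (Matrix.PosDef.one.smul hc)
  exact (Matrix.isUnit_iff_isUnit_det G).1 hpos.isUnit

lemma mul_dotProduct_leastSquares_sub_le {P : Matrix m n ℝ} (hc : 0 < c)
    (hP : (Pᵀ * P - c • (1 : Matrix n n ℝ)).PosSemidef) (z : m → ℝ) (s : n → ℝ) :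
    c * ((((Pᵀ * P)⁻¹ * Pᵀ) *ᵥ z - s) ⬝ᵥ (((Pᵀ * P)⁻¹ * Pᵀ) *ᵥ z - s))
      ≤ (z - P *ᵥ s) ⬝ᵥ (z - P *ᵥ s) := by
  have hdet := isUnit_det_of_posSemidef_sub_smul_one hc hP
  set u := ((Pᵀ * P)⁻¹ * Pᵀ) *ᵥ z - s with hu
  set e := z - P *ᵥ s with he
  have normal_eq : (Pᵀ * P) *ᵥ u = Pᵀ *ᵥ e := by
    rw [hu, he, Matrix.mulVec_sub, Matrix.mulVec_mulVec, ← Matrix.mul_assoc,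
      Matrix.mul_nonsing_inv _ hdet, Matrix.one_mul, Matrix.mulVec_sub, Matrix.mulVec_mulVec]
  have hproj : P *ᵥ u ⬝ᵥ P *ᵥ u = P *ᵥ u ⬝ᵥ e := by
    rw [← dotProduct_transpose_mul_self_mulVec, normal_eq, Matrix.dotProduct_mulVec,
      Matrix.vecMul_transpose]
  have hpyth : (e - P *ᵥ u) ⬝ᵥ (e - P *ᵥ u) = e ⬝ᵥ e - P *ᵥ u ⬝ᵥ P *ᵥ u := by
    rw [sub_dotProduct, dotProduct_sub e, dotProduct_sub (P *ᵥ u), dotProduct_comm e (P *ᵥ u),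
      ← hproj]
    ring
  have hnonneg : 0 ≤ (e - P *ᵥ u) ⬝ᵥ (e - P *ᵥ u) := dotProduct_self_star_nonneg _
  have hlower := posSemidef_transpose_mul_self_sub_smul_one_iff.1 hP u
  linarith

end LeastSquares

open Topology in
lemma le_of_eventually_le_of_homogeneous {E : Type*} [AddCommGroup E] [Module ℝ E]
    [TopologicalSpace E] [ContinuousSMul ℝ E] {f g : E → ℝ}
    (hf : ∀ t > 0, ∀ v, f (t • v) = t * f v) (hg : ∀ t > 0, ∀ v, g (t • v) = t * g v)
    (h : ∀ᶠ v in 𝓝 0, f v ≤ g v) (v : E) : f v ≤ g v := by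
  have hlim : Filter.Tendsto (fun t : ℝ ↦ t • v) (𝓝[>] 0) (𝓝 0) := by
    have hcont : Continuous fun t : ℝ ↦ t • v := by fun_prop
    simpa using (hcont.tendsto 0).mono_left nhdsWithin_le_nhds
  obtain ⟨t, hle, ht⟩ := ((hlim.eventually h).and self_mem_nhdsWithin).exists
  rw [hf t ht, hg t ht] at hle
  exact le_of_mul_le_mul_left hle ht

section EuclideanNorm

variable {k m : ℕ}

lemma eNorm_eq_norm_toLp (x : Fin m → ℝ) : eNorm x = ‖WithLp.toLp 2 x‖ := by
  simp [eNorm, EuclideanSpace.norm_eq]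

lemma eNorm_nonneg (x : Fin m → ℝ) : 0 ≤ eNorm x := Real.sqrt_nonneg _

lemma eNorm_sq (x : Fin m → ℝ) : eNorm x ^ 2 = x ⬝ᵥ x := by
  rw [eNorm, Real.sq_sqrt (Finset.sum_nonneg fun i _ ↦ sq_nonneg _)]
  simp only [dotProduct, sq]

lemma eNorm_smul (t : ℝ) (x : Fin m → ℝ) : eNorm (t • x) = |t| * eNorm x := by
  simp only [eNorm_eq_norm_toLp, WithLp.toLp_smul, norm_smul, Real.norm_eq_abs]

lemma eNorm_sub_eNorm_le (x y : Fin m → ℝ) : eNorm x - eNorm y ≤ eNorm (x - y) := by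
  simpa only [eNorm_eq_norm_toLp, WithLp.toLp_sub] using norm_sub_norm_le _ _

lemma eNorm_sub_comm (x y : Fin m → ℝ) : eNorm (x - y) = eNorm (y - x) := by
  simpa only [eNorm_eq_norm_toLp, WithLp.toLp_sub] using norm_sub_rev _ _

lemma eNorm_le_eNorm_of_abs_le {x y : Fin m → ℝ} (h : ∀ i, |x i| ≤ |y i|) :
    eNorm x ≤ eNorm y :=
  Real.sqrt_le_sqrt (Finset.sum_le_sum fun i _ ↦ sq_le_sq.2 (h i))

lemma eNorm_le_mul_eNorm_of_abs_le {c : ℝ} (hc : 0 ≤ c) {x y : Fin m → ℝ}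
    (h : ∀ i, |x i| ≤ c * |y i|) : eNorm x ≤ c * eNorm y := by
  rw [← abs_of_nonneg hc, ← eNorm_smul]
  exact eNorm_le_eNorm_of_abs_le fun i ↦ by simpa [abs_mul, abs_of_nonneg hc] using h i

lemma mul_eNorm_le_eNorm_iff {c : ℝ} (hc : 0 ≤ c) {x : Fin m → ℝ} {y : Fin k → ℝ} :
    c * eNorm x ≤ eNorm y ↔ c ^ 2 * (x ⬝ᵥ x) ≤ y ⬝ᵥ y := by
  rw [← eNorm_sq, ← eNorm_sq, ← mul_pow,
    sq_le_sq₀ (mul_nonneg hc (eNorm_nonneg x)) (eNorm_nonneg y)]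

lemma abs_dotProduct_le_eNorm_mul_eNorm (x y : Fin m → ℝ) : |x ⬝ᵥ y| ≤ eNorm x * eNorm y := by
  rw [eNorm, eNorm, ← Real.sqrt_mul (Finset.sum_nonneg fun i _ ↦ sq_nonneg _)]
  exact Real.abs_le_sqrt (Finset.sum_mul_sq_le_sq_mul_sq _ _ _)

lemma continuous_eNorm : Continuous (eNorm : (Fin m → ℝ) → ℝ) := by
  unfold eNorm
  fun_prop

end EuclideanNorm

section Stack

variable {n : ℕ}

lemma stack3_eq_append (a b c : Fin n → ℝ) :
    stack3 n a b c = Fin.append (Fin.append a b) c ∘ finCongr (by ring) := by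
  funext j
  simp only [stack3, Fin.append, Fin.addCases, Function.comp_apply, finCongr_apply, Fin.val_cast,
    Fin.val_castLT, eq_rec_constant]
  split_ifs <;> first | rfl | omega | (congr 1; ext; simp; omega)

lemma exists_stack3_eq (d : Fin (3 * n) → ℝ) : ∃ a b c, stack3 n a b c = d := by
  let d' : Fin (n + n + n) → ℝ := d ∘ finCongr (by ring)
  refine ⟨fun i ↦ d' (.castAdd n (.castAdd n i)), fun i ↦ d' (.castAdd n (.natAdd n i)),
    fun i ↦ d' (.natAdd (n + n) i), ?_⟩
  rw [stack3_eq_append, Fin.append_castAdd_natAdd (f := fun i ↦ d' (.castAdd n i)),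
    Fin.append_castAdd_natAdd]
  rfl

lemma stack3_sub (a b c a' b' c' : Fin n → ℝ) :
    stack3 n (a - a') (b - b') (c - c') = stack3 n a b c - stack3 n a' b' c' := by
  funext j
  simp only [stack3, Pi.sub_apply]
  split_ifs <;> rfl

lemma stack3_smul (t : ℝ) (a b c : Fin n → ℝ) :
    stack3 n (t • a) (t • b) (t • c) = t • stack3 n a b c := by
  funext j
  simp only [stack3, Pi.smul_apply]
  split_ifs <;> rfl

lemma stack3_dotProduct_stack3 (a b c a' b' c' : Fin n → ℝ) :
    stack3 n a b c ⬝ᵥ stack3 n a' b' c' = a ⬝ᵥ a' + b ⬝ᵥ b' + c ⬝ᵥ c' := by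
  simp only [stack3_eq_append, comp_equiv_dotProduct_comp_equiv]
  simp only [dotProduct, Fin.sum_univ_add, Fin.append_left, Fin.append_right]

lemma eNorm_stack3_sub_stack3 (a b c a' b' c' : Fin n → ℝ) :
    eNorm (stack3 n a b c - stack3 n a' b' c')
      = √(∑ i, (a i - a' i) ^ 2 + (∑ i, (b i - b' i) ^ 2 + ∑ i, (c i - c' i) ^ 2)) := by
  rw [← Real.sqrt_sq (eNorm_nonneg _), eNorm_sq, ← stack3_sub, stack3_dotProduct_stack3, add_assoc]
  simp only [dotProduct, Pi.sub_apply, sq]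

lemma eNorm_le_eNorm_stack3_middle (a b c : Fin n → ℝ) : eNorm b ≤ eNorm (stack3 n a b c) := by
  have ha : 0 ≤ a ⬝ᵥ a := dotProduct_self_star_nonneg a
  have hc : 0 ≤ c ⬝ᵥ c := dotProduct_self_star_nonneg c
  rw [← one_mul (eNorm b), mul_eNorm_le_eNorm_iff zero_le_one, stack3_dotProduct_stack3]
  linarith

end Stack

section LuenbergerMap

/-- The factor `q_λ(θ_a) = 1 − V_λᵀ θ_a`, equal to `det (A(θ_a) − λ I) / (−λ)ⁿ` for `λ ≠ 0`.
It is the denominator of `Tᵢ` for `λ = λᵢ`. -/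
noncomputable def Tdenom (n : ℕ) (lam : ℝ) (θa : Fin n → ℝ) : ℝ := 1 - Vlam n lam ⬝ᵥ θa

variable {n : ℕ}

lemma continuous_Tdenom (lam : ℝ) : Continuous (Tdenom n lam) := by
  unfold Tdenom dotProduct
  fun_prop

lemma Vlam_vecMul_Acan_sub_smul_one {lam : ℝ} (hlam : lam ≠ 0) (θa : Fin n → ℝ) :
    Vlam n lam ᵥ* (Acan n θa - lam • (1 : Matrix (Fin n) (Fin n) ℝ))
      = Tdenom n lam θa • e1 n := by
  rw [Matrix.vecMul_sub, Matrix.vecMul_smul, Matrix.vecMul_one]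
  funext ⟨j, hj⟩
  simp only [Pi.sub_apply, Pi.smul_apply, smul_eq_mul, Matrix.vecMul, dotProduct, Acan, e1, Tdenom]
  cases j with
  | zero =>
    have first_entry : lam * Vlam n lam ⟨0, hj⟩ = -1 := by simp [Vlam, hlam]
    simp only [↓reduceIte, mul_neg, Finset.sum_neg_distrib, mul_one, first_entry]
    ring
  | succ k =>
    have shift : lam * Vlam n lam ⟨k + 1, hj⟩ = Vlam n lam ⟨k, by omega⟩ := by
      simp only [Vlam]
      field_simp
      ring
    have superdiagonal (i : Fin n) : k + 1 = (i : ℕ) + 1 ↔ i = ⟨k, by omega⟩ := by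
      simp [Fin.ext_iff, eq_comm]
    simp only [superdiagonal]
    simp [shift]

lemma Tdenom_ne_zero {lam : ℝ} (hlam : lam ≠ 0) {θa : Fin n → ℝ}
    (hu : IsUnit (Acan n θa - lam • (1 : Matrix (Fin n) (Fin n) ℝ)).det) :
    Tdenom n lam θa ≠ 0 := by
  intro hq
  have hker := Vlam_vecMul_Acan_sub_smul_one hlam θa
  rw [hq, zero_smul] at hker
  have hV : Vlam n lam = 0 :=
    Matrix.vecMul_injective_of_isUnit ((Matrix.isUnit_iff_isUnit_det _).2 hu)
      (hker.trans (Matrix.zero_vecMul _).symm)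
  simp [Tdenom, hV] at hq

variable {r : ℕ} {lam : Fin r → ℝ}

lemma Tdenom_mul_Tcan {i : Fin r} (hlam : lam i ≠ 0) {θa : Fin n → ℝ}
    (hu : IsUnit (Acan n θa - lam i • (1 : Matrix (Fin n) (Fin n) ℝ)).det)
    (x θb : Fin n → ℝ) (w : Fin r → ℝ) :
    Tdenom n (lam i) θa * Tcan n r lam x θa θb w i = Vlam n (lam i) ⬝ᵥ (x - w i • θb) := by
  rw [Tcan, ← smul_eq_mul, ← smul_dotProduct, ← Matrix.smul_vecMul,
    ← Vlam_vecMul_Acan_sub_smul_one hlam, Matrix.vecMul_vecMul, Matrix.mul_nonsing_inv _ hu,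
    Matrix.vecMul_one]

lemma continuousOn_Tcan {S : Set ((Fin n → ℝ) × (Fin n → ℝ) × (Fin n → ℝ))}
    (hlam : ∀ i, lam i ≠ 0)
    (hu : ∀ i, ∀ ξ ∈ S, IsUnit (Acan n ξ.2.1 - lam i • (1 : Matrix (Fin n) (Fin n) ℝ)).det)
    (w : Fin r → ℝ) : ContinuousOn (fun ξ ↦ Tcan n r lam ξ.1 ξ.2.1 ξ.2.2 w) S := by
  refine continuousOn_pi.2 fun i ↦ ?_
  have hq (ξ) (hξ : ξ ∈ S) := Tdenom_ne_zero (hlam i) (hu i ξ hξ)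
  have hcont : ContinuousOn (fun ξ : (Fin n → ℝ) × (Fin n → ℝ) × (Fin n → ℝ) ↦
      (Vlam n (lam i) ⬝ᵥ (ξ.1 - w i • ξ.2.2)) / Tdenom n (lam i) ξ.2.1) S := by
    refine ContinuousOn.div ?_ ((continuous_Tdenom _).comp (by fun_prop)).continuousOn hq
    simp only [dotProduct, Pi.sub_apply, Pi.smul_apply]
    fun_prop
  refine hcont.congr fun ξ hξ ↦ ?_
  rw [eq_div_iff (hq ξ hξ), mul_comm, Tdenom_mul_Tcan (hlam i) (hu i ξ hξ)]

lemma exists_Tdenom_bounds {K : Set (Fin n → ℝ)} (hK : IsCompact K) (hlam : ∀ i, lam i ≠ 0)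
    (hu : ∀ i, ∀ θa ∈ K, IsUnit (Acan n θa - lam i • (1 : Matrix (Fin n) (Fin n) ℝ)).det) :
    ∃ q > 0, ∃ Q > 0, ∀ i, ∀ θa ∈ K, q ≤ |Tdenom n (lam i) θa| ∧ |Tdenom n (lam i) θa| ≤ Q := by
  have hcompact : IsCompact ((Set.univ : Set (Fin r)) ×ˢ K) := isCompact_univ.prod hK
  have hcont : Continuous fun p : Fin r × (Fin n → ℝ) ↦ Tdenom n (lam p.1) p.2 :=
    continuous_prod_of_discrete_left.2 fun i ↦ continuous_Tdenom (lam i)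
  obtain ⟨q, hq, hlower⟩ := hcompact.exists_forall_le' hcont.abs.continuousOn
    fun p hp ↦ abs_pos.2 (Tdenom_ne_zero (hlam p.1) (hu p.1 p.2 hp.2))
  obtain ⟨Q, hupper⟩ := hcompact.exists_bound_of_continuousOn hcont.continuousOn
  refine ⟨q, hq, max Q 1, by positivity, fun i θa hθ ↦ ⟨hlower (i, θa) ⟨trivial, hθ⟩, ?_⟩⟩
  exact (hupper (i, θa) ⟨trivial, hθ⟩).trans (le_max_left _ _)

lemma Pmat_mulVec_stack3 (z w : Fin r → ℝ) (a b c : Fin n → ℝ) (i : Fin r) :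
    (Pmat n r lam z w *ᵥ stack3 n a b c) i
      = Vlam n (lam i) ⬝ᵥ (a - w i • c) + z i * (Vlam n (lam i) ⬝ᵥ b) := by
  have hrow : Pmat n r lam z w i
      = stack3 n (Vlam n (lam i)) (z i • Vlam n (lam i)) (-(w i) • Vlam n (lam i)) := rfl
  rw [Matrix.mulVec, hrow, stack3_dotProduct_stack3, smul_dotProduct, smul_dotProduct,
    dotProduct_sub, dotProduct_smul]
  simp only [smul_eq_mul]
  ring

lemma continuous_Pmat_mulVec (w : Fin r → ℝ) (d : Fin (3 * n) → ℝ) :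
    Continuous fun z ↦ Pmat n r lam z w *ᵥ d := by
  obtain ⟨a, b, c, rfl⟩ := exists_stack3_eq d
  refine continuous_pi fun i ↦ ?_
  simp only [Pmat_mulVec_stack3]
  fun_prop

lemma exists_eNorm_Pmat_mulVec_sub_le (n : ℕ) (lam : Fin r → ℝ) :
    ∃ K > 0, ∀ z z' w d, eNorm (Pmat n r lam z w *ᵥ d - Pmat n r lam z' w *ᵥ d)
      ≤ K * eNorm d * eNorm (z - z') := by
  obtain ⟨M, hM⟩ := Finite.exists_le fun i ↦ eNorm (Vlam n (lam i))
  have hK : 0 < max M 1 := by positivity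
  refine ⟨max M 1, hK, fun z z' w d ↦ ?_⟩
  obtain ⟨a, b, c, rfl⟩ := exists_stack3_eq d
  refine eNorm_le_mul_eNorm_of_abs_le (mul_nonneg hK.le (eNorm_nonneg _)) fun i ↦ ?_
  calc |(Pmat n r lam z w *ᵥ stack3 n a b c - Pmat n r lam z' w *ᵥ stack3 n a b c) i|
      = |Vlam n (lam i) ⬝ᵥ b| * |(z - z') i| := by
        rw [← abs_mul, Pi.sub_apply, Pmat_mulVec_stack3, Pmat_mulVec_stack3, Pi.sub_apply]
        ring_nf
    _ ≤ eNorm (Vlam n (lam i)) * eNorm b * |(z - z') i| := by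
        gcongr
        exact abs_dotProduct_le_eNorm_mul_eNorm _ _
    _ ≤ max M 1 * eNorm (stack3 n a b c) * |(z - z') i| := by
        gcongr
        · exact eNorm_nonneg b
        · exact (hM i).trans (le_max_left _ _)
        · exact eNorm_le_eNorm_stack3_middle a b c

lemma sub_Pmat_mulVec_stack3 {i : Fin r} (hlam : lam i ≠ 0) {θa : Fin n → ℝ}
    (hu : IsUnit (Acan n θa - lam i • (1 : Matrix (Fin n) (Fin n) ℝ)).det)
    (x θb : Fin n → ℝ) (z w : Fin r → ℝ) :
    (z - Pmat n r lam z w *ᵥ stack3 n x θa θb) i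
      = Tdenom n (lam i) θa * (z - Tcan n r lam x θa θb w) i := by
  rw [Pi.sub_apply, Pi.sub_apply, mul_sub, Tdenom_mul_Tcan hlam hu, Pmat_mulVec_stack3, Tdenom]
  ring

lemma Pmat_Tcan_mulVec_stack3_sub {i : Fin r} (hlam : lam i ≠ 0) {x θa θb x' θa' θb' : Fin n → ℝ}
    (hu : IsUnit (Acan n θa - lam i • (1 : Matrix (Fin n) (Fin n) ℝ)).det)
    (hu' : IsUnit (Acan n θa' - lam i • (1 : Matrix (Fin n) (Fin n) ℝ)).det) (w : Fin r → ℝ) :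
    (Pmat n r lam (Tcan n r lam x θa θb w) w *ᵥ (stack3 n x' θa' θb' - stack3 n x θa θb)) i
      = Tdenom n (lam i) θa' * (Tcan n r lam x' θa' θb' w - Tcan n r lam x θa θb w) i := by
  have hres := sub_Pmat_mulVec_stack3 hlam hu x θb (Tcan n r lam x θa θb w) w
  have hres' := sub_Pmat_mulVec_stack3 hlam hu' x' θb' (Tcan n r lam x θa θb w) w
  rw [sub_self, Pi.zero_apply, mul_zero] at hres
  simp only [Matrix.mulVec_sub, Pi.sub_apply] at hres hres' ⊢
  linear_combination hres - hres'

end LuenbergerMap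

section LowerBound

variable {n r : ℕ} {lam : Fin r → ℝ} {S : Set ((Fin n → ℝ) × (Fin n → ℝ) × (Fin n → ℝ))}
  {w : Fin r → ℝ} {q L : ℝ}

lemma mul_eNorm_le_eNorm_Pmat_Tcan_mulVec_of_isOpen (hS : IsOpen S) (hlam : ∀ i, lam i ≠ 0)
    (hu : ∀ i, ∀ ξ ∈ S, IsUnit (Acan n ξ.2.1 - lam i • (1 : Matrix (Fin n) (Fin n) ℝ)).det)
    (hq : 0 ≤ q) (hqS : ∀ i, ∀ ξ ∈ S, q ≤ |Tdenom n (lam i) ξ.2.1|)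
    (hinj : ∀ ξ ∈ S, ∀ ξ' ∈ S, L * eNorm (stack3 n ξ.1 ξ.2.1 ξ.2.2 - stack3 n ξ'.1 ξ'.2.1 ξ'.2.2)
      ≤ eNorm (Tcan n r lam ξ.1 ξ.2.1 ξ.2.2 w - Tcan n r lam ξ'.1 ξ'.2.1 ξ'.2.2 w))
    {ξ : (Fin n → ℝ) × (Fin n → ℝ) × (Fin n → ℝ)} (hξ : ξ ∈ S) (d : Fin (3 * n) → ℝ) :
    q * L * eNorm d ≤ eNorm (Pmat n r lam (Tcan n r lam ξ.1 ξ.2.1 ξ.2.2 w) w *ᵥ d) := by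
  set P := Pmat n r lam (Tcan n r lam ξ.1 ξ.2.1 ξ.2.2 w) w
  have hchord (ξ') (hξ' : ξ' ∈ S) :
      q * L * eNorm (stack3 n ξ'.1 ξ'.2.1 ξ'.2.2 - stack3 n ξ.1 ξ.2.1 ξ.2.2)
        ≤ eNorm (P *ᵥ (stack3 n ξ'.1 ξ'.2.1 ξ'.2.2 - stack3 n ξ.1 ξ.2.1 ξ.2.2)) := by
    rw [mul_assoc]
    refine (mul_le_mul_of_nonneg_left (hinj ξ' hξ' ξ hξ) hq).trans ?_
    rw [← abs_of_nonneg hq, ← eNorm_smul]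
    refine eNorm_le_eNorm_of_abs_le fun i ↦ ?_
    rw [Pmat_Tcan_mulVec_stack3_sub (hlam i) (hu i ξ hξ) (hu i ξ' hξ'), Pi.smul_apply, smul_eq_mul,
      abs_mul, abs_mul, abs_of_nonneg hq]
    exact mul_le_mul_of_nonneg_right (hqS i ξ' hξ') (abs_nonneg _)
  obtain ⟨a, b, c, rfl⟩ := exists_stack3_eq d
  refine le_of_eventually_le_of_homogeneous (E := (Fin n → ℝ) × (Fin n → ℝ) × (Fin n → ℝ))
    (f := fun v ↦ q * L * eNorm (stack3 n v.1 v.2.1 v.2.2))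
    (g := fun v ↦ eNorm (P *ᵥ stack3 n v.1 v.2.1 v.2.2))
    (fun t ht v ↦ ?_) (fun t ht v ↦ ?_) ?_ (a, b, c)
  · simp only [Prod.smul_fst, Prod.smul_snd, stack3_smul, eNorm_smul, abs_of_pos ht]
    ring
  · simp only [Prod.smul_fst, Prod.smul_snd, stack3_smul, Matrix.mulVec_smul, eNorm_smul,
      abs_of_pos ht]
  · have hadd : Continuous fun v ↦ ξ + v := by fun_prop
    filter_upwards [hadd.continuousAt.eventually_mem (hS.mem_nhds (by simpa using hξ))] with v hv
    simpa [← stack3_sub] using hchord (ξ + v) hv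

lemma mul_eNorm_le_eNorm_Pmat_Tcan_mulVec_of_mem_closure (hS : IsOpen S) (hlam : ∀ i, lam i ≠ 0)
    (hu : ∀ i, ∀ ξ ∈ closure S,
      IsUnit (Acan n ξ.2.1 - lam i • (1 : Matrix (Fin n) (Fin n) ℝ)).det)
    (hq : 0 ≤ q) (hqS : ∀ i, ∀ ξ ∈ S, q ≤ |Tdenom n (lam i) ξ.2.1|)
    (hinj : ∀ ξ ∈ S, ∀ ξ' ∈ S, L * eNorm (stack3 n ξ.1 ξ.2.1 ξ.2.2 - stack3 n ξ'.1 ξ'.2.1 ξ'.2.2)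
      ≤ eNorm (Tcan n r lam ξ.1 ξ.2.1 ξ.2.2 w - Tcan n r lam ξ'.1 ξ'.2.1 ξ'.2.2 w))
    {ξ : (Fin n → ℝ) × (Fin n → ℝ) × (Fin n → ℝ)} (hξ : ξ ∈ closure S) (d : Fin (3 * n) → ℝ) :
    q * L * eNorm d ≤ eNorm (Pmat n r lam (Tcan n r lam ξ.1 ξ.2.1 ξ.2.2 w) w *ᵥ d) := by
  have hcont := (continuous_eNorm.comp (continuous_Pmat_mulVec (lam := lam) w d)).comp_continuousOn
    (continuousOn_Tcan hlam hu w)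
  have hopen (ξ) (hξ : ξ ∈ S) := mul_eNorm_le_eNorm_Pmat_Tcan_mulVec_of_isOpen hS hlam
    (fun i ξ hξ ↦ hu i ξ (subset_closure hξ)) hq hqS hinj hξ d
  exact le_on_closure hopen continuousOn_const hcont hξ

end LowerBound

lemma mul_eNorm_TstarExpl_sub_stack3_le {n r : ℕ} {lam z w : Fin r → ℝ} {c Q : ℝ} (hc : 0 < c)
    (hP : ∀ d, c * eNorm d ≤ eNorm (Pmat n r lam z w *ᵥ d)) (hlam : ∀ i, lam i ≠ 0)
    {θa : Fin n → ℝ}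
    (hu : ∀ i, IsUnit (Acan n θa - lam i • (1 : Matrix (Fin n) (Fin n) ℝ)).det)
    (hQ : 0 ≤ Q) (hQθ : ∀ i, |Tdenom n (lam i) θa| ≤ Q) (x θb : Fin n → ℝ) :
    c * eNorm (TstarExpl n r lam (c ^ 2) z w - stack3 n x θa θb)
      ≤ Q * eNorm (z - Tcan n r lam x θa θb w) := by
  have hpsd := posSemidef_transpose_mul_self_sub_smul_one_iff.2 fun d ↦
    (mul_eNorm_le_eNorm_iff hc.le).1 (hP d)
  have hresidual : eNorm (z - Pmat n r lam z w *ᵥ stack3 n x θa θb)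
      ≤ Q * eNorm (z - Tcan n r lam x θa θb w) := by
    refine eNorm_le_mul_eNorm_of_abs_le hQ fun i ↦ ?_
    rw [sub_Pmat_mulVec_stack3 (hlam i) (hu i), abs_mul]
    exact mul_le_mul_of_nonneg_right (hQθ i) (abs_nonneg _)
  rw [TstarExpl, if_pos hpsd]
  exact ((mul_eNorm_le_eNorm_iff hc.le).2
    (mul_dotProduct_leastSquares_sub_le (by positivity) hpsd z _)).trans hresidual

theorem explicit_left_inverse_general {n r : ℕ} {Cx : Set (Fin n → ℝ)} (hCxo : IsOpen Cx)
    {Cθ : Set ((Fin n → ℝ) × (Fin n → ℝ))} (hCθo : IsOpen Cθ) (hCθb : Bornology.IsBounded Cθ)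
    {W : Set (Fin r → ℝ)} {lam : Fin r → ℝ} (hlam : ∀ i, lam i ≠ 0)
    (hinv : ∀ i : Fin r, ∀ θ ∈ closure Cθ,
      IsUnit (Acan n θ.1 - lam i • (1 : Matrix (Fin n) (Fin n) ℝ)).det)
    {LT : ℝ} (hLT : 0 < LT)
    (hinj : ∀ x ∈ Cx, ∀ x' ∈ Cx, ∀ θ ∈ Cθ, ∀ θ' ∈ Cθ, ∀ w ∈ W,
      LT * eNorm (stack3 n x θ.1 θ.2 - stack3 n x' θ'.1 θ'.2)
        ≤ eNorm (Tcan n r lam x θ.1 θ.2 w - Tcan n r lam x' θ'.1 θ'.2 w)) :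
    ∃ pmin > (0 : ℝ), ∃ εT > (0 : ℝ), ∃ LTstar > (0 : ℝ),
      ∀ x ∈ closure Cx, ∀ θ ∈ closure Cθ, ∀ w ∈ W, ∀ z : Fin r → ℝ,
        eNorm (z - Tcan n r lam x θ.1 θ.2 w) ≤ εT →
        eNorm (TstarExpl n r lam pmin z w - stack3 n x θ.1 θ.2)
          ≤ LTstar * eNorm (z - Tcan n r lam x θ.1 θ.2 w) := by
  obtain ⟨q, hq, Q, hQ, hqQ⟩ := exists_Tdenom_bounds (K := Prod.fst '' closure Cθ)
    (hCθb.isCompact_closure.image continuous_fst) hlam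
    (fun i ↦ Set.forall_mem_image.2 (hinv i))
  replace hqQ (i θ) (hθ : θ ∈ closure Cθ) := hqQ i θ.1 (Set.mem_image_of_mem _ hθ)
  obtain ⟨K, hK, hPlip⟩ := exists_eNorm_Pmat_mulVec_sub_le n lam
  obtain ⟨c, hc, hcqLT⟩ : ∃ c > 0, 2 * c = q * LT := ⟨q * LT / 2, by positivity, by ring⟩
  refine ⟨c ^ 2, by positivity, c / K, by positivity, Q / c, by positivity, ?_⟩
  intro x hx θ hθ w hw z hz
  have hclosure : closure (Cx ×ˢ Cθ) = closure Cx ×ˢ closure Cθ := closure_prod_eq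
  have hT (d) : 2 * c * eNorm d ≤ eNorm (Pmat n r lam (Tcan n r lam x θ.1 θ.2 w) w *ᵥ d) :=
    hcqLT ▸ mul_eNorm_le_eNorm_Pmat_Tcan_mulVec_of_mem_closure (S := Cx ×ˢ Cθ) (hCxo.prod hCθo)
      hlam (fun i ξ hξ ↦ hinv i ξ.2 (hclosure.subset hξ).2) hq.le
      (fun i ξ hξ ↦ (hqQ i ξ.2 (subset_closure hξ.2)).1)
      (fun ξ hξ ξ' hξ' ↦ hinj _ hξ.1 _ hξ'.1 _ hξ.2 _ hξ'.2 w hw)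
      (ξ := (x, θ)) (hclosure.superset ⟨hx, hθ⟩) d
  have hP (d) : c * eNorm d ≤ eNorm (Pmat n r lam z w *ᵥ d) := by
    have hclose : K * eNorm d * eNorm (Tcan n r lam x θ.1 θ.2 w - z) ≤ c * eNorm d := by
      rw [eNorm_sub_comm, mul_right_comm]
      exact mul_le_mul_of_nonneg_right ((le_div_iff₀' hK).1 hz) (eNorm_nonneg d)
    linarith [hT d, hPlip (Tcan n r lam x θ.1 θ.2 w) z w d, eNorm_sub_eNorm_le
      (Pmat n r lam (Tcan n r lam x θ.1 θ.2 w) w *ᵥ d) (Pmat n r lam z w *ᵥ d)]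
  rw [div_mul_eq_mul_div, le_div_iff₀' hc]
  exact mul_eNorm_TstarExpl_sub_stack3_le hc hP hlam (fun i ↦ hinv i θ hθ) hQ.le
    (fun i ↦ (hqQ i θ hθ).2) x θ.2

/-- Proposition 5, explicit left inverse `T*`. -/
theorem explicit_left_inverse
    (n r : ℕ) (hn : 0 < n)
    (Cx : Set (Fin n → ℝ)) (hCxo : IsOpen Cx) (hCxb : Bornology.IsBounded Cx)
    (Cθ : Set ((Fin n → ℝ) × (Fin n → ℝ)))
    (hCθo : IsOpen Cθ) (hCθb : Bornology.IsBounded Cθ)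
    (Cw : Set (Fin r → ℝ)) (hCwo : IsOpen Cw) (hCwb : Bornology.IsBounded Cw)
    (lam : Fin r → ℝ) (hneg : ∀ i, lam i < 0)
    (hinv : ∀ i : Fin r, ∀ θ ∈ closure Cθ,
      IsUnit (Acan n θ.1 - lam i • (1 : Matrix (Fin n) (Fin n) ℝ)).det)
    (LT : ℝ) (hLT : 0 < LT)
    (hinj : ∀ x ∈ closure Cx, ∀ x' ∈ closure Cx, ∀ θ ∈ closure Cθ, ∀ θ' ∈ closure Cθ,
        ∀ w ∈ closure Cw,
        eNorm (Tcan n r lam x θ.1 θ.2 w - Tcan n r lam x' θ'.1 θ'.2 w)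
          ≥ LT * Real.sqrt (∑ i, (x i - x' i) ^ 2
              + (∑ j, (θ.1 j - θ'.1 j) ^ 2 + ∑ j, (θ.2 j - θ'.2 j) ^ 2))) :
    ∃ pmin > (0 : ℝ), ∃ εT > (0 : ℝ), ∃ LTstar > (0 : ℝ),
      ∀ x ∈ closure Cx, ∀ θ ∈ closure Cθ, ∀ w ∈ closure Cw, ∀ z : Fin r → ℝ,
        eNorm (z - Tcan n r lam x θ.1 θ.2 w) ≤ εT →
        eNorm (TstarExpl n r lam pmin z w - stack3 n x θ.1 θ.2)
          ≤ LTstar * eNorm (z - Tcan n r lam x θ.1 θ.2 w) := by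
  refine explicit_left_inverse_general hCxo hCθo hCθb (fun i ↦ (hneg i).ne) hinv hLT ?_
  simpa only [eNorm_stack3_sub_stack3] using fun x hx x' hx' θ hθ θ' hθ' ↦
    hinj x (subset_closure hx) x' (subset_closure hx') θ (subset_closure hθ) θ' (subset_closure hθ')
end
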